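/- For every integer s ≥ 1 and every ε > 0 there exists N such that for all n ≥ N there exists a graph G on n vertices containing no subgraph isomorphic to B_{2s} with e(G) ≥ (2s(s+1)(√(4s²+5s+1) − 2s − 1)/(√(4s²+5s+1) − s − 1)^{3/2} − ε)·n^{3/2}. (That is, ex(n, B_{2s}) ≥ 2s(s+1)(√(4s²+5s+1)−2s−1)/(√(4s²+5s+1)−s−1)^{3/2}·(1+o(1))·n^{3/2}.) -/

import Mathlib

open SimpleGraph

/-- `F` is contained in `G` as a subgraph: there is an injective map preserving adjacency. -/
def ContainsCopy {α β : Type*} (F : SimpleGraph α) (G : SimpleGraph β) : Prop :=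
  ∃ f : α → β, Function.Injective f ∧ ∀ ⦃a b : α⦄, F.Adj a b → G.Adj (f a) (f b)

/-- `Bgraph t = K₂ □ S_t`, the Cartesian product of an edge and a star with `t` edges. -/
def Bgraph (t : ℕ) : SimpleGraph (Fin 2 × (Fin 1 ⊕ Fin t)) :=
  (⊤ : SimpleGraph (Fin 2)).boxProd (completeBipartiteGraph (Fin 1) (Fin t))

/-!
Join the points `(x, y)` and `(x', y')` of the affine plane over a field with `q` elements when
`y + y' = x x'`: two columns are perfectly matched, and `u`, `v`, `w`, `z` can form a path
`w, u, v, z` closed by the edge `w z` only if `w` lies in the column of `v` or `z` in that of `u`.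
Hence each of the `t` four-cycles of a `B_t` with spine `u v` supplies a further neighbour of `u`
in the column of `v`, or of `v` in the column of `u`, so that together these two fibres have at
least `t + 2` vertices.

Now replace each point by `s` vertices, or by `s + 1` if its column belongs to a set `S`, and
between two columns of `S` keep only the edges joining distinct labels. A vertex then has at most
`s + 1` neighbours in any other column, and `s + 1` only if its own column is outside `S` and the
other one is inside, so the two fibres have at most `2s + 1` vertices and there is no `B_{2s}`. With
`|S| ∼ β q` the graph has `∼ (s + β) q²` vertices and `∼ s (s + 2β - β²) q³ / 2` edges. The best
ratio of the latter to the `3/2` power of the former is attained at `β = √(4s² + 5s + 1) - 2s - 1`.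

Every interval `[θx, x]` with `θ < 1` and `x` large contains a prime `q`. Let `w` be smooth with
compact support, `w 0 > 0`, and with `𝓕 w` at most the indicator of a short interval `[-c, c]`; up
to scaling one can take `w = (2πr)² h + h''` with `h` a self-convolution and `r` large, because
`𝓕 w u = (2π)² (r² - u²) 𝓕 h u` and `𝓕 h ≥ 0`. The nonvanishing of `L`-functions on `Re s = 1` and
the Riemann–Lebesgue lemma show that `∑ Λ(n) / n * 𝓕 w (log n - y)` tends to a positive multiple
of `w 0` as `y → ∞`, while it bounds from below the sum of `Λ(n) / n` over
`n ∈ [exp (y - c), exp (y + c)]`, to which proper prime powers contribute `o(1)`.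
-/

open Filter MeasureTheory Set Topology
open scoped FourierTransform ComplexOrder ContDiff

/-! ### Books of four-cycles and the parabola graph -/

theorem Bgraph_exists_adj {t : ℕ} (a : Fin 2 × (Fin 1 ⊕ Fin t)) :
    ∃ b, (Bgraph t).Adj a b := by
  obtain ⟨i, j⟩ := a
  exact ⟨(i + 1, j), by fin_cases i <;> simp [Bgraph]⟩

theorem ContainsCopy.of_map {α V W : Type*} {H : SimpleGraph α} {G : SimpleGraph V} {e : V ↪ W}
    (hH : ∀ a, ∃ b, H.Adj a b) (h : ContainsCopy H (G.map e)) : ContainsCopy H G := by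
  obtain ⟨f, f_inj, hf⟩ := h
  have f_mem_range (a : α) : ∃ v, e v = f a := by
    obtain ⟨b, hab⟩ := hH a
    obtain ⟨v, -, -, hv, -⟩ := (G.map_adj e _ _).mp (hf hab)
    exact ⟨v, hv⟩
  choose g hg using f_mem_range
  refine ⟨g, fun a b hab ↦ f_inj (by rw [← hg a, hab, hg b]), fun a b hab ↦ ?_⟩
  simpa only [← hg, SimpleGraph.map_adj_apply] using hf hab

theorem exists_fin_not_containsCopy {α V : Type*} [Fintype V] {H : SimpleGraph α}
    {G : SimpleGraph V} {n : ℕ} (hH : ∀ a, ∃ b, H.Adj a b) (hG : ¬ ContainsCopy H G)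
    (hn : Fintype.card V ≤ n) :
    ∃ G' : SimpleGraph (Fin n), ¬ ContainsCopy H G' ∧ G'.edgeSet.ncard = G.edgeSet.ncard := by
  obtain ⟨e⟩ := Function.Embedding.nonempty_of_card_le (hn.trans_eq (Fintype.card_fin n).symm)
  refine ⟨G.map e, fun h ↦ hG (h.of_map hH), ?_⟩
  rw [SimpleGraph.edgeSet_map, Set.ncard_image_of_injective _ e.sym2Map.injective]

theorem ContainsCopy.exists_adj_add_two_le_card_add_card {V P : Type*} [Fintype V] [DecidableEq P]
    {G : SimpleGraph V} [DecidableRel G.Adj] {t : ℕ} {π : V → P}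
    (hπ : ∀ ⦃u v w z⦄, G.Adj u v → G.Adj u w → G.Adj v z → G.Adj w z → π w = π v ∨ π z = π u)
    (h : ContainsCopy (Bgraph t) G) :
    ∃ u v, G.Adj u v ∧ t + 2 ≤ Finset.card {w ∈ G.neighborFinset u | π w = π v} +
        Finset.card {z ∈ G.neighborFinset v | π z = π u} := by
  obtain ⟨f, f_inj, hf⟩ := h
  let vertex (i : Fin 2) (o : Option (Fin t)) : V := f (i, o.elim (.inl 0) .inr)
  have vertex_inj {i j : Fin 2} {o o' : Option (Fin t)} :
      vertex i o = vertex j o' ↔ i = j ∧ o = o' := by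
    cases o <;> cases o' <;> simp [vertex, f_inj.eq_iff]
  have spine (i : Fin 2) : G.Adj (vertex i none) (vertex (i + 1) none) := hf (by simp [Bgraph])
  have page (i : Fin 2) (k : Fin t) : G.Adj (vertex i none) (vertex i (some k)) :=
    hf (by simp [Bgraph])
  have rung (k : Fin t) : G.Adj (vertex 0 (some k)) (vertex 1 (some k)) := hf (by simp [Bgraph])
  let pages (i : Fin 2) : Finset (Fin t) := {k | π (vertex i (some k)) = π (vertex (i + 1) none)}
  have card_pages_add_one_le (i : Fin 2) : (pages i).card + 1 ≤
      Finset.card {w ∈ G.neighborFinset (vertex i none) | π w = π (vertex (i + 1) none)} := by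
    rw [← Finset.card_insertNone]
    refine Finset.card_le_card_of_injOn
      (fun o ↦ o.elim (vertex (i + 1) none) fun k ↦ vertex i (some k)) (fun o ho ↦ ?_) ?_
    · rcases o with _ | k
      · simpa using spine i
      · simpa [page, pages] using ho
    · rintro (_ | k) _ (_ | l) _ <;> simp [vertex_inj]
  have t_le : t ≤ (pages 0).card + (pages 1).card := by
    have hcover : pages 0 ∪ pages 1 = Finset.univ := by
      ext k
      simpa [pages] using hπ (spine 0) (page 0 k) (page 1 k) (rung k)
    calc t = (pages 0 ∪ pages 1).card := by rw [hcover, Finset.card_univ, Fintype.card_fin]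
      _ ≤ (pages 0).card + (pages 1).card := Finset.card_union_le _ _
  have hle₀ := card_pages_add_one_le 0
  have hle₁ := card_pages_add_one_le 1
  exact ⟨vertex 0 none, vertex 1 none, spine 0, by simp only [Fin.reduceAdd] at hle₀ hle₁; omega⟩

/-- A vertex of the blown-up parabola graph: a point `(x, y)` of the affine plane over `F` together
with a label. The extra label `none` is only available over the columns `x ∈ S`. -/
@[ext]
structure LabelledPoint {F : Type*} (S : Finset F) (ι : Type*) where
  x : F
  y : F
  label : Option ι
  mem_of_label_eq_none : label = none → x ∈ S

namespace LabelledPoint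

variable {F ι : Type*} {S : Finset F}

noncomputable instance [Fintype F] [Fintype ι] : Fintype (LabelledPoint S ι) :=
  .ofInjective (fun u ↦ (u.x, u.y, u.label)) fun u v h ↦ by
    cases u; cases v; simpa using h

section NeighborLabels

variable [DecidableEq F] [Fintype ι] [DecidableEq ι]

/-- The labels `j` such that `u` may be adjacent to a point with label `j` in another column `x`. -/
def neighborLabels (u : LabelledPoint S ι) (x : F) : Finset (Option ι) :=
  {j | (j = none → x ∈ S) ∧ ¬ (u.x ∈ S ∧ x ∈ S ∧ u.label = j)}

theorem mem_neighborLabels {u : LabelledPoint S ι} {x : F} {j : Option ι} :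
    j ∈ u.neighborLabels x ↔ (j = none → x ∈ S) ∧ ¬ (u.x ∈ S ∧ x ∈ S ∧ u.label = j) := by
  simp [neighborLabels]

theorem card_neighborLabels (u : LabelledPoint S ι) (x : F) :
    (u.neighborLabels x).card = Fintype.card ι + if u.x ∉ S ∧ x ∈ S then 1 else 0 := by
  by_cases hx : x ∈ S
  · by_cases hu : u.x ∈ S
    · have : u.neighborLabels x = Finset.univ.erase u.label := by
        ext j; simp [mem_neighborLabels, hx, hu, eq_comm]
      simp [this, hx, hu]
    · have : u.neighborLabels x = Finset.univ := by ext j; simp [mem_neighborLabels, hx, hu]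
      simp [this, hx, hu]
  · have : u.neighborLabels x = Finset.univ.erase none := by ext j; simp [mem_neighborLabels, hx]
    simp [this, hx]

end NeighborLabels

section Counting

variable [Fintype F] [Fintype ι]

theorem card_filter_x_eq [DecidableEq F] (x : F) :
    Finset.card {u : LabelledPoint S ι | u.x = x} =
      Fintype.card F * (Fintype.card ι + if x ∈ S then 1 else 0) := by
  classical
  have card_labels : Finset.card {j : Option ι | j = none → x ∈ S} =
      Fintype.card ι + if x ∈ S then 1 else 0 := by
    by_cases hx : x ∈ S
    · simp [hx]
    · simp [hx, Finset.filter_ne']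
  rw [← card_labels, ← Finset.card_univ, ← Finset.card_product]
  refine Finset.card_bij (fun u _ ↦ (u.y, u.label)) ?_ ?_ fun yj hyj ↦ ?_
  · simp only [Finset.mem_filter, Finset.mem_univ, true_and]
    rintro u rfl
    simpa using u.mem_of_label_eq_none
  · simp only [Finset.mem_filter, Finset.mem_univ, true_and]
    rintro u rfl v hvu huv
    exact LabelledPoint.ext hvu.symm (congrArg Prod.fst huv) (congrArg Prod.snd huv)
  · exact ⟨⟨x, yj.1, yj.2, by simpa using hyj⟩, by simp⟩

theorem sum_comp_x [DecidableEq F] (f : F → ℕ) :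
    ∑ u : LabelledPoint S ι, f u.x =
      ∑ x, Fintype.card F * (Fintype.card ι + if x ∈ S then 1 else 0) * f x := by
  rw [← Finset.sum_fiberwise' Finset.univ (fun u : LabelledPoint S ι ↦ u.x) f]
  simp_rw [Finset.sum_const, card_filter_x_eq, smul_eq_mul]

theorem card_eq :
    Fintype.card (LabelledPoint S ι) =
      Fintype.card F * (Fintype.card F * Fintype.card ι + S.card) := by
  classical
  rw [← Finset.card_univ, Finset.card_eq_sum_ones, sum_comp_x fun _ ↦ 1]
  simp [← Finset.mul_sum, Finset.sum_add_distrib]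

end Counting

end LabelledPoint

open LabelledPoint

/-- The parabola graph `y + y' = x x'` on the affine plane over `F`, blown up: each point is
replaced by one vertex per label available in its column, and two columns in `S` are only joined
between distinct labels. -/
def blowUpGraph {F : Type*} [Field F] (S : Finset F) (ι : Type*) :
    SimpleGraph (LabelledPoint S ι) where
  Adj u v := u.x ≠ v.x ∧ u.y + v.y = u.x * v.x ∧ ¬ (u.x ∈ S ∧ v.x ∈ S ∧ u.label = v.label)
  symm := ⟨fun u v ⟨hx, hy, hl⟩ ↦ ⟨hx.symm, by rw [add_comm, hy, mul_comm],
    fun ⟨hv, hu, h⟩ ↦ hl ⟨hu, hv, h.symm⟩⟩⟩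
  loopless := ⟨fun u h ↦ h.1 rfl⟩

namespace blowUpGraph

variable {F ι : Type*} [Field F] {S : Finset F}

theorem x_eq_or_x_eq_of_cycle ⦃u v w z : LabelledPoint S ι⦄ (huv : (blowUpGraph S ι).Adj u v)
    (huw : (blowUpGraph S ι).Adj u w) (hvz : (blowUpGraph S ι).Adj v z)
    (hwz : (blowUpGraph S ι).Adj w z) : w.x = v.x ∨ z.x = u.x := by
  have h : (w.x - v.x) * (z.x - u.x) = 0 := by
    linear_combination huw.2.1 + hvz.2.1 - huv.2.1 - hwz.2.1
  simpa [sub_eq_zero] using h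

section Degrees

variable [Fintype F] [DecidableEq F] [Fintype ι] [DecidableEq ι]

instance : DecidableRel (blowUpGraph S ι).Adj := fun u v ↦ by unfold blowUpGraph; infer_instance

theorem card_neighborFinset_filter_x_eq {u : LabelledPoint S ι} {x : F} (hx : u.x ≠ x) :
    Finset.card {w ∈ (blowUpGraph S ι).neighborFinset u | w.x = x} = (u.neighborLabels x).card := by
  refine Finset.card_bij (fun w _ ↦ w.label) ?_ ?_ fun j hj ↦ ?_
  · simp only [Finset.mem_filter, mem_neighborFinset]
    rintro w ⟨⟨-, -, hl⟩, rfl⟩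
    exact mem_neighborLabels.mpr ⟨w.mem_of_label_eq_none, hl⟩
  · simp only [Finset.mem_filter, mem_neighborFinset]
    rintro w ⟨⟨-, hw, -⟩, rfl⟩ z ⟨⟨-, hz, -⟩, hzw⟩ hlabel
    exact LabelledPoint.ext hzw.symm (add_left_cancel (by rw [hw, hz, hzw])) hlabel
  · obtain ⟨hj_mem, hj_ne⟩ := mem_neighborLabels.mp hj
    refine ⟨⟨x, u.x * x - u.y, j, hj_mem⟩, ?_, rfl⟩
    exact Finset.mem_filter.mpr ⟨(mem_neighborFinset ..).mpr ⟨hx, add_sub_cancel .., hj_ne⟩, rfl⟩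

theorem degree_eq (u : LabelledPoint S ι) :
    (blowUpGraph S ι).degree u =
      Fintype.card ι * (Fintype.card F - 1) + if u.x ∈ S then 0 else S.card := by
  calc (blowUpGraph S ι).degree u
    _ = ∑ x ∈ Finset.univ.erase u.x,
        Finset.card {w ∈ (blowUpGraph S ι).neighborFinset u | w.x = x} :=
      Finset.card_eq_sum_card_fiberwise fun w hw ↦ by simpa using
        ((mem_neighborFinset _ _ _).mp hw).1.symm
    _ = ∑ x ∈ Finset.univ.erase u.x, (Fintype.card ι + if u.x ∉ S ∧ x ∈ S then 1 else 0) :=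
      Finset.sum_congr rfl fun x hx ↦ by
        rw [card_neighborFinset_filter_x_eq (Finset.ne_of_mem_erase hx).symm, card_neighborLabels]
    _ = Fintype.card ι * (Fintype.card F - 1) + if u.x ∈ S then 0 else S.card := by
      rw [Finset.sum_add_distrib, Finset.sum_const, smul_eq_mul, mul_comm,
        Finset.card_erase_of_mem (Finset.mem_univ _), Finset.card_univ, ← Finset.card_filter]
      congr 1
      split_ifs with hu
      · simp [hu]
      · congr 1
        ext x
        simp only [hu, not_false_eq_true, true_and, Finset.mem_filter, Finset.mem_erase,
          Finset.mem_univ, and_true, and_iff_right_iff_imp]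
        rintro hx rfl
        exact hu hx

end Degrees

theorem not_containsCopy_Bgraph [Finite F] [Fintype ι] :
    ¬ ContainsCopy (Bgraph (2 * Fintype.card ι)) (blowUpGraph S ι) := by
  classical
  have := Fintype.ofFinite F
  intro h
  obtain ⟨u, v, huv, hcard⟩ := h.exists_adj_add_two_le_card_add_card x_eq_or_x_eq_of_cycle
  rw [card_neighborFinset_filter_x_eq huv.1, card_neighborFinset_filter_x_eq huv.1.symm,
    card_neighborLabels, card_neighborLabels] at hcard
  split_ifs at hcard <;> first | tauto | omega

theorem two_mul_ncard_edgeSet [Fintype F] [Fintype ι] :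
    2 * (blowUpGraph S ι).edgeSet.ncard =
      Fintype.card (LabelledPoint S ι) * (Fintype.card ι * (Fintype.card F - 1)) +
        Fintype.card F * Fintype.card ι * (Fintype.card F - S.card) * S.card := by
  classical
  rw [← coe_edgeFinset, Set.ncard_coe_finset, ← sum_degrees_eq_twice_card_edges]
  simp_rw [degree_eq, Finset.sum_add_distrib]
  congr 1
  · simp
  · rw [sum_comp_x fun x ↦ if x ∈ S then 0 else S.card]
    have term_eq (x : F) : Fintype.card F * (Fintype.card ι + if x ∈ S then 1 else 0) *
        (if x ∈ S then 0 else S.card) =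
          if x ∈ Sᶜ then Fintype.card F * Fintype.card ι * S.card else 0 := by
      by_cases hx : x ∈ S <;> simp [hx]
    simp_rw [term_eq, Finset.sum_ite_mem, Finset.univ_inter, Finset.sum_const, Finset.card_compl,
      smul_eq_mul]
    ring

end blowUpGraph

/-! ### Primes in `[θ x, x]` -/

theorem fourier_fourierChar_smul (w : ℝ → ℂ) (y v : ℝ) :
    𝓕 (fun t ↦ 𝐞 (t * y) • w t) v = 𝓕 w (v - y) := by
  simp_rw [Real.fourier_real_eq, smul_smul, ← AddChar.map_add_eq_mul]
  congr! 4
  ring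

theorem LSeries_term_add_two_pi_mul_I (a : ℕ → ℂ) (s : ℂ) (t : ℝ) (n : ℕ) :
    LSeries.term a (s + 2 * Real.pi * t * Complex.I) n =
      LSeries.term a s n * 𝐞 (-(t * Real.log n)) := by
  rcases eq_or_ne n 0 with rfl | hn
  · simp
  have hn' : (n : ℂ) ≠ 0 := Nat.cast_ne_zero.mpr hn
  rw [LSeries.term_of_ne_zero hn, LSeries.term_of_ne_zero hn, Complex.cpow_add _ _ hn',
    div_mul_eq_div_div, div_eq_mul_inv _ (_ ^ (_ * Complex.I)), ← Complex.cpow_neg,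
    Complex.cpow_def_of_ne_zero hn' (-_), Real.fourierChar_apply]
  push_cast [Complex.natCast_log]
  ring_nf

theorem hasSum_LSeries_term_mul_fourier_log {a : ℕ → ℂ} {s : ℂ} {w : ℝ → ℂ}
    (ha : LSeriesSummable a s) (hw : Integrable w) :
    HasSum (fun n : ℕ ↦ LSeries.term a s n * 𝓕 w (Real.log n))
      (∫ t : ℝ, LSeries a (s + 2 * Real.pi * t * Complex.I) * w t) := by
  let F (n : ℕ) (t : ℝ) : ℂ := LSeries.term a s n * (𝐞 (-(t * Real.log n)) • w t)
  have norm_F (n : ℕ) (t : ℝ) : ‖F n t‖ = ‖LSeries.term a s n‖ * ‖w t‖ := by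
    rw [norm_mul, Circle.norm_smul]
  have hF (n : ℕ) : Integrable (F n) :=
    (((Real.fourierIntegral_convergent_iff (Real.log n)).mpr hw).congr
      (by simp [mul_comm])).const_mul _
  have hF_sum (t : ℝ) : ∑' n, F n t = LSeries a (s + 2 * Real.pi * t * Complex.I) * w t := by
    simp_rw [F, LSeries, LSeries_term_add_two_pi_mul_I, Circle.smul_def, smul_eq_mul, ← mul_assoc,
      tsum_mul_right]
  have key := hasSum_integral_of_summable_integral_norm hF (by
    simpa only [norm_F, integral_const_mul] using ha.norm.mul_right _)
  simpa only [hF_sum, F, integral_const_mul, ← Real.fourier_real_eq] using key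

theorem setIntegral_Ioi_exp_mul_fourier {w : ℝ → ℂ} (hw : Integrable w) {z : ℂ} (hz : 0 < z.re) :
    ∫ v in Ioi (0 : ℝ), Complex.exp (-z * v) * 𝓕 w v =
      ∫ t : ℝ, w t / (z + 2 * Real.pi * t * Complex.I) := by
  let g : ℝ → ℂ := (Ioi 0).indicator fun v ↦ Complex.exp (-z * v)
  have hg : Integrable g := (integrable_indicator_iff measurableSet_Ioi).mpr
    (integrableOn_exp_mul_complex_Ioi (by simpa) 0)
  have fourier_g (t : ℝ) : 𝓕 g t = (z + 2 * Real.pi * t * Complex.I)⁻¹ := by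
    have hre : (-(z + 2 * Real.pi * t * Complex.I)).re < 0 := by simpa
    calc 𝓕 g t = ∫ v in Ioi (0 : ℝ), Complex.exp (-(z + 2 * Real.pi * t * Complex.I) * v) := by
          rw [Real.fourier_real_eq, ← integral_indicator measurableSet_Ioi]
          congr! 2 with v
          by_cases hv : v ∈ Ioi 0
          · simp only [g, indicator_of_mem hv, Circle.smul_def, Real.fourierChar_apply, smul_eq_mul,
              ← Complex.exp_add]
            push_cast
            ring_nf
          · simp [g, indicator_of_notMem hv]
      _ = (z + 2 * Real.pi * t * Complex.I)⁻¹ := by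
          rw [integral_exp_mul_complex_Ioi hre, neg_div_neg_eq]
          simp
  have key := VectorFourier.integral_fourierIntegral_smul_eq_flip (L := innerₗ ℝ)
    Real.continuous_fourierChar continuous_inner hw hg
  calc ∫ v in Ioi (0 : ℝ), Complex.exp (-z * v) * 𝓕 w v = ∫ v, 𝓕 w v • g v := by
        rw [← integral_indicator measurableSet_Ioi]
        congr! 2 with v
        by_cases hv : v ∈ Ioi 0 <;> simp [g, hv, mul_comm]
    _ = ∫ t, w t • 𝓕 g t := by simpa [flip_innerₗ] using! key
    _ = ∫ t : ℝ, w t / (z + 2 * Real.pi * t * Complex.I) := by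
        simp_rw [fourier_g, smul_eq_mul, div_eq_mul_inv]

section Tauberian

variable {a : ℕ → ℂ} {A : ℂ} {G : ℂ → ℂ} {w : ℝ → ℂ}

theorem continuousOn_integral_line_mul (hG : ContinuousOn G {s | 1 ≤ s.re}) (hw : Continuous w)
    (hw' : HasCompactSupport w) :
    ContinuousOn (fun η : ℝ ↦ ∫ t : ℝ, G (1 + η + 2 * Real.pi * t * Complex.I) * w t) (Ici 0) := by
  refine continuousOn_integral_of_compact_support hw' ?_ fun η t _ ht ↦ by
    simp [image_eq_zero_of_notMem_tsupport ht]
  refine ContinuousOn.mul (hG.comp (by fun_prop) fun p hp ↦ ?_) (by fun_prop)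
  simpa using hp.1

theorem hasSum_LSeries_term_mul_fourier_log_of_eqOn
    (ha : ∀ s : ℂ, 1 < s.re → LSeriesSummable a s)
    (hG : ContinuousOn G {s | 1 ≤ s.re})
    (hGa : EqOn G (fun s ↦ LSeries a s - A / (s - 1)) {s | 1 < s.re})
    (hw : Continuous w) (hw' : HasCompactSupport w) {η : ℝ} (hη : 0 < η) :
    HasSum (fun n : ℕ ↦ LSeries.term a (1 + η) n * 𝓕 w (Real.log n))
      ((∫ t : ℝ, G (1 + η + 2 * Real.pi * t * Complex.I) * w t) +
        A * ∫ v in Ioi (0 : ℝ), Complex.exp (-η * v) * 𝓕 w v) := by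
  have hw_int : Integrable w := hw.integrable_of_hasCompactSupport hw'
  convert hasSum_LSeries_term_mul_fourier_log (ha (1 + η) (by simpa)) hw_int
  rw [setIntegral_Ioi_exp_mul_fourier hw_int (by simpa), ← integral_const_mul, ← integral_add]
  · congr! 2 with t
    rw [hGa (by simpa)]
    ring_nf
  · refine Continuous.integrable_of_hasCompactSupport ?_ hw'.mul_left
    refine .mul (hG.comp_continuous (by fun_prop) fun t ↦ ?_) hw
    simp [hη.le]
  · refine Continuous.integrable_of_hasCompactSupport ?_ ?_
    · refine continuous_const.mul (hw.div (by fun_prop) fun t h ↦ hη.ne' ?_)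
      simpa using congrArg Complex.re h
    · simp_rw [div_eq_mul_inv]
      exact hw'.mul_right.mul_left

theorem tendsto_setIntegral_Ioi_exp_neg_mul {f : ℝ → ℂ} (hf : IntegrableOn f (Ioi 0)) :
    Tendsto (fun η : ℝ ↦ ∫ v in Ioi (0 : ℝ), Complex.exp (-η * v) * f v) (𝓝[>] 0)
      (𝓝 (∫ v in Ioi (0 : ℝ), f v)) := by
  refine tendsto_integral_filter_of_dominated_convergence (fun v ↦ ‖f v‖) ?_ ?_ hf.norm ?_
  · exact .of_forall fun η ↦ (by fun_prop : Continuous fun v : ℝ ↦ Complex.exp (-η * v))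
      |>.aestronglyMeasurable.mul hf.aestronglyMeasurable
  · filter_upwards [self_mem_nhdsWithin] with η (hη : 0 < η)
    filter_upwards [ae_restrict_mem measurableSet_Ioi] with v (hv : 0 < v)
    rw [norm_mul, Complex.norm_exp]
    refine mul_le_of_le_one_left (norm_nonneg _) (Real.exp_le_one_iff.mpr ?_)
    simpa using (mul_pos hη hv).le
  · refine .of_forall fun v ↦ Tendsto.mono_left ?_ nhdsWithin_le_nhds
    have : Continuous fun η : ℝ ↦ Complex.exp (-η * v) * f v := by fun_prop
    simpa using this.tendsto 0

theorem tendsto_tsum_LSeries_term_mul_fourier_log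
    (ha : ∀ s : ℂ, 1 < s.re → LSeriesSummable a s)
    (hG : ContinuousOn G {s | 1 ≤ s.re})
    (hGa : EqOn G (fun s ↦ LSeries a s - A / (s - 1)) {s | 1 < s.re})
    (hw : Continuous w) (hw' : HasCompactSupport w) (hw_fourier : Integrable (𝓕 w)) :
    Tendsto (fun η : ℝ ↦ ∑' n : ℕ, LSeries.term a (1 + η) n * 𝓕 w (Real.log n)) (𝓝[>] 0)
      (𝓝 ((∫ t : ℝ, G (1 + 2 * Real.pi * t * Complex.I) * w t) +
        A * ∫ v in Ioi (0 : ℝ), 𝓕 w v)) := by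
  have hG_tendsto := ((continuousOn_integral_line_mul hG hw hw') 0 self_mem_Ici).tendsto.mono_left
    (nhdsWithin_mono 0 Ioi_subset_Ici_self)
  simp only [Complex.ofReal_zero, add_zero] at hG_tendsto
  refine (hG_tendsto.add ((tendsto_setIntegral_Ioi_exp_neg_mul
    hw_fourier.integrableOn).const_mul A)).congr' ?_
  filter_upwards [self_mem_nhdsWithin] with η hη
  exact (hasSum_LSeries_term_mul_fourier_log_of_eqOn ha hG hGa hw hw' hη).tsum_eq.symm

theorem integral_fourier_eq_apply_zero (hw : Continuous w) (hw_int : Integrable w)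
    (hw_fourier : Integrable (𝓕 w)) : ∫ v, 𝓕 w v = w 0 := by
  rw [← congrFun (hw.fourierInv_fourier_eq hw_int hw_fourier) 0, Real.fourierInv_eq]
  simp

theorem tendsto_setIntegral_Ioi_comp_sub_right {f : ℝ → ℂ} (hf : Integrable f) :
    Tendsto (fun y ↦ ∫ v in Ioi (0 : ℝ), f (v - y)) atTop (𝓝 (∫ v, f v)) := by
  have hcover := aecover_Ioi (μ := (volume : Measure ℝ)) tendsto_neg_atTop_atBot
  refine (hcover.integral_tendsto_of_countably_generated hf).congr fun y ↦ ?_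
  rw [← integral_indicator measurableSet_Ioi, ← integral_indicator measurableSet_Ioi,
    ← integral_sub_right_eq_self _ y]
  congr! 2
  simp [indicator_apply]

theorem tendsto_integral_line_mul_fourierChar_smul (w : ℝ → ℂ) :
    Tendsto (fun y : ℝ ↦ ∫ t : ℝ, G (1 + 2 * Real.pi * t * Complex.I) * (𝐞 (t * y) • w t))
      atTop (𝓝 0) := by
  have h := (Real.tendsto_integral_exp_smul_cocompact
    fun t : ℝ ↦ G (1 + 2 * Real.pi * t * Complex.I) * w t).comp
      (tendsto_neg_atTop_atBot.mono_right atBot_le_cocompact)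
  simpa [mul_smul_comm, Function.comp_def] using h

theorem tendsto_integral_line_add_setIntegral_fourier (hw : Continuous w)
    (hw_int : Integrable w) (hw_fourier : Integrable (𝓕 w)) :
    Tendsto (fun y : ℝ ↦ (∫ t : ℝ, G (1 + 2 * Real.pi * t * Complex.I) * (𝐞 (t * y) • w t)) +
      A * ∫ v in Ioi (0 : ℝ), 𝓕 w (v - y)) atTop (𝓝 (A * w 0)) := by
  have h := (tendsto_integral_line_mul_fourierChar_smul (G := G) w).add
    ((tendsto_setIntegral_Ioi_comp_sub_right hw_fourier).const_mul A)
  rwa [zero_add, integral_fourier_eq_apply_zero hw hw_int hw_fourier] at h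

end Tauberian

theorem re_LSeries_term_mul_le {a : ℕ → ℝ} (ha : ∀ n, 0 ≤ a n) {c η y : ℝ} (hη : 0 ≤ η)
    {f : ℝ → ℂ} (hf : ∀ u, (f u).re ≤ (Icc (-c) c).indicator 1 u) (n : ℕ) :
    (LSeries.term (fun n ↦ (a n : ℂ)) (1 + η) n * f (Real.log n - y)).re ≤
      if n ∈ Finset.Icc ⌈Real.exp (y - c)⌉₊ ⌊Real.exp (y + c)⌋₊ then a n / n else 0 := by
  rcases Nat.eq_zero_or_pos n with rfl | hn
  · simp
  have hn' : (1 : ℝ) ≤ n := mod_cast hn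
  have mem_window : n ∈ Finset.Icc ⌈Real.exp (y - c)⌉₊ ⌊Real.exp (y + c)⌋₊ ↔
      Real.log n - y ∈ Icc (-c) c := by
    rw [Finset.mem_Icc, Nat.ceil_le, Nat.le_floor_iff (Real.exp_pos _).le,
      ← Real.le_log_iff_exp_le (by positivity), ← Real.log_le_iff_le_exp (by positivity), mem_Icc]
    constructor <;> rintro ⟨_, _⟩ <;> constructor <;> linarith
  have term_eq : LSeries.term (fun n ↦ (a n : ℂ)) (1 + η) n = (a n / (n : ℝ) ^ (1 + η) : ℝ) := by
    rw [LSeries.term_of_ne_zero hn.ne']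
    push_cast [Complex.ofReal_cpow (Nat.cast_nonneg n)]
    rfl
  rw [term_eq, Complex.re_ofReal_mul]
  simp only [mem_window]
  have hcoef : 0 ≤ a n / (n : ℝ) ^ (1 + η) := div_nonneg (ha n) (by positivity)
  split_ifs with h
  · calc a n / (n : ℝ) ^ (1 + η) * (f (Real.log n - y)).re ≤ a n / (n : ℝ) ^ (1 + η) * 1 := by
          gcongr
          simpa [h] using hf (Real.log n - y)
      _ ≤ a n / n := by
          rw [mul_one]
          gcongr
          · exact ha n
          · exact Real.self_le_rpow_of_one_le hn' (by linarith)
  · exact mul_nonpos_of_nonneg_of_nonpos hcoef (by simpa [h] using hf (Real.log n - y))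

theorem eventually_lt_sum_Icc_div {a : ℕ → ℝ} (ha : ∀ n, 0 ≤ a n)
    (ha_summable : ∀ s : ℂ, 1 < s.re → LSeriesSummable (fun n ↦ (a n : ℂ)) s)
    {A : ℝ} {G : ℂ → ℂ} (hG : ContinuousOn G {s | 1 ≤ s.re})
    (hGa : EqOn G (fun s ↦ LSeries (fun n ↦ (a n : ℂ)) s - A / (s - 1)) {s | 1 < s.re})
    {w : ℝ → ℂ} (hw : Continuous w) (hw' : HasCompactSupport w) (hw_fourier : Integrable (𝓕 w))
    {c : ℝ} (hwc : ∀ u, (𝓕 w u).re ≤ (Icc (-c) c).indicator 1 u)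
    {B : ℝ} (hB : B < A * (w 0).re) :
    ∀ᶠ y in atTop, B < ∑ n ∈ Finset.Icc ⌈Real.exp (y - c)⌉₊ ⌊Real.exp (y + c)⌋₊, a n / n := by
  have h_atTop := (Complex.continuous_re.tendsto _).comp
    (tendsto_integral_line_add_setIntegral_fourier (G := G) (A := A) hw
      (hw.integrable_of_hasCompactSupport hw') hw_fourier)
  rw [Complex.re_ofReal_mul] at h_atTop
  filter_upwards [h_atTop.eventually_const_lt hB] with y hy
  let wy (t : ℝ) : ℂ := 𝐞 (t * y) • w t
  have hwy : Continuous wy := by fun_prop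
  have hwy' : HasCompactSupport wy := hw'.smul_left
  have fourier_wy : 𝓕 wy = fun v ↦ 𝓕 w (v - y) := funext (fourier_fourierChar_smul w y)
  have h_zero := tendsto_tsum_LSeries_term_mul_fourier_log ha_summable hG hGa hwy hwy'
    (fourier_wy ▸ hw_fourier.comp_sub_right y)
  simp only [fourier_wy] at h_zero
  obtain ⟨η, hη_lt, hη : 0 < η⟩ := ((((Complex.continuous_re.tendsto _).comp
    h_zero).eventually_const_lt hy).and self_mem_nhdsWithin).exists
  refine hη_lt.trans_le ?_
  have h_sum :=
    (hasSum_LSeries_term_mul_fourier_log_of_eqOn ha_summable hG hGa hwy hwy' hη).summable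
  simp only [fourier_wy] at h_sum
  set W := Finset.Icc ⌈Real.exp (y - c)⌉₊ ⌊Real.exp (y + c)⌋₊
  have h_window : HasSum (fun n ↦ if n ∈ W then a n / n else 0) (∑ n ∈ W, a n / n) := by
    simpa using hasSum_sum_of_ne_finset_zero (s := W)
      (f := fun n ↦ if n ∈ W then a n / n else 0) fun n hn ↦ if_neg hn
  exact hasSum_le (re_LSeries_term_mul_le ha hη.le hwc) (Complex.hasSum_re h_sum.hasSum) h_window

section Minorant

variable {w : ℝ → ℂ}

theorem integrable_fourier_of_hasCompactSupport (hw : ContDiff ℝ ∞ w) (hw' : HasCompactSupport w) :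
    Integrable (𝓕 w) := by
  simpa [SchwartzMap.fourier_coe] using (𝓕 (hw'.toSchwartzMap hw)).integrable (μ := volume)

theorem fourier_deriv_of_hasCompactSupport (hw : ContDiff ℝ ∞ w) (hw' : HasCompactSupport w)
    (u : ℝ) : 𝓕 (deriv w) u = 2 * Real.pi * Complex.I * u * 𝓕 w u := by
  have hdiff : Differentiable ℝ w := hw.differentiable (by simp)
  have hderiv : Continuous (deriv w) := hw.continuous_deriv (by simp)
  simpa using congrFun (Real.fourier_deriv (hw.continuous.integrable_of_hasCompactSupport hw') hdiff
    (hderiv.integrable_of_hasCompactSupport hw'.deriv)) u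

theorem star_fourier_ofReal_of_even {g : ℝ → ℝ} (hg : Function.Even g) (u : ℝ) :
    star (𝓕 (fun t ↦ (g t : ℂ)) u) = 𝓕 (fun t ↦ (g t : ℂ)) u := by
  calc star (𝓕 (fun t ↦ (g t : ℂ)) u) = 𝓕⁻ (fun t ↦ (g t : ℂ)) u := by
        rw [Real.fourier_real_eq, Real.fourierInv_eq, Complex.star_def, ← integral_conj]
        simp [Circle.smul_def, ← Circle.coe_inv_eq_conj, ← AddChar.map_neg_eq_inv, mul_comm]
    _ = 𝓕 (fun t ↦ (g t : ℂ)) u := by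
        simp_rw [Real.fourierInv_eq_fourier_comp_neg, hg _]

theorem exists_contDiff_hasCompactSupport_fourier_nonneg :
    ∃ h : ℝ → ℂ, ContDiff ℝ ∞ h ∧ HasCompactSupport h ∧ 0 < (h 0).re ∧ ∀ u, 0 ≤ 𝓕 h u := by
  let φ : ContDiffBump (0 : ℝ) := default
  let g (t : ℝ) : ℂ := φ t
  have hg : ContDiff ℝ ∞ g := Complex.ofRealCLM.contDiff.comp φ.contDiff
  have hg' : HasCompactSupport g := φ.hasCompactSupport.comp_left Complex.ofReal_zero
  have hg_int : Integrable g := hg.continuous.integrable_of_hasCompactSupport hg'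
  refine ⟨convolution g g (ContinuousLinearMap.mul ℂ ℂ) volume, ?_, hg'.convolution _ hg', ?_, ?_⟩
  · exact hg'.contDiff_convolution_right (ContinuousLinearMap.mul ℝ ℂ)
      hg_int.locallyIntegrable hg
  · have h_apply : convolution g g (ContinuousLinearMap.mul ℂ ℂ) volume 0 = (∫ t, φ t ^ 2 : ℝ) := by
      simp [convolution_def, g, φ.neg, sq, ← integral_complex_ofReal]
    rw [h_apply, Complex.ofReal_re]
    refine Continuous.integral_pos_of_hasCompactSupport_nonneg_nonzero (x := 0)
      (φ.continuous.pow 2) ?_ (fun t ↦ sq_nonneg _) ?_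
    · simp_rw [sq]; exact φ.hasCompactSupport.mul_left
    · simp [φ.one_of_mem_closedBall, φ.rIn_pos.le]
  · intro u
    rw [Real.fourier_mul_convolution_eq hg_int hg_int]
    nth_rw 1 [← star_fourier_ofReal_of_even (g := φ) (fun t ↦ φ.neg t) u]
    exact star_mul_self_nonneg _

theorem fourier_comp_mul_left (w : ℝ → ℂ) {κ : ℝ} (hκ : 0 < κ) (u : ℝ) :
    𝓕 (fun t ↦ w (κ * t)) u = (κ⁻¹ : ℝ) * 𝓕 w (u / κ) := by
  have h := Measure.integral_comp_mul_left (fun t ↦ 𝐞 (-(t * (u / κ))) • w t) κ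
  rw [abs_of_pos (inv_pos.mpr hκ), Complex.real_smul, ← Real.fourier_real_eq] at h
  rw [← h, Real.fourier_real_eq]
  congr! 5 with t
  field_simp

theorem fourier_mul_add_deriv_deriv {h : ℝ → ℂ} (hh : ContDiff ℝ ∞ h) (hh' : HasCompactSupport h)
    (r u : ℝ) :
    𝓕 (fun t ↦ ((2 * Real.pi * r) ^ 2 : ℝ) * h t + deriv (deriv h) t) u =
      (((2 * Real.pi) ^ 2 * (r ^ 2 - u ^ 2) : ℝ) : ℂ) * 𝓕 h u := by
  have hderiv : ContDiff ℝ ∞ (deriv h) := (contDiff_infty_iff_deriv.mp hh).2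
  have hderiv₂ : ContDiff ℝ ∞ (deriv (deriv h)) := (contDiff_infty_iff_deriv.mp hderiv).2
  have integrable_kernel {f : ℝ → ℂ} (hf : Integrable f) :
      Integrable fun t ↦ 𝐞 (-(t * u)) • f t := by
    simpa [mul_comm] using (Real.fourierIntegral_convergent_iff u).mpr hf
  calc 𝓕 (fun t ↦ ((2 * Real.pi * r) ^ 2 : ℝ) * h t + deriv (deriv h) t) u
    _ = ((2 * Real.pi * r) ^ 2 : ℝ) * 𝓕 h u + 𝓕 (deriv (deriv h)) u := by
      simp_rw [Real.fourier_real_eq, smul_add, ← mul_smul_comm _ (((2 * Real.pi * r) ^ 2 : ℝ) : ℂ)]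
      rw [integral_add, integral_const_mul]
      · exact (integrable_kernel (hh.continuous.integrable_of_hasCompactSupport hh')).const_mul _
      · exact integrable_kernel
          (hderiv₂.continuous.integrable_of_hasCompactSupport hh'.deriv.deriv)
    _ = (((2 * Real.pi) ^ 2 * (r ^ 2 - u ^ 2) : ℝ) : ℂ) * 𝓕 h u := by
      rw [fourier_deriv_of_hasCompactSupport hderiv hh'.deriv,
        fourier_deriv_of_hasCompactSupport hh hh']
      push_cast
      linear_combination (4 * Real.pi ^ 2 * u ^ 2 * 𝓕 h u) * Complex.I_sq

theorem exists_radius_fourier_nonpos_of_lt_abs :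
    ∃ r > 0, ∃ w : ℝ → ℂ, ContDiff ℝ ∞ w ∧ HasCompactSupport w ∧ 0 < (w 0).re ∧
      ∀ u, r < |u| → 𝓕 w u ≤ 0 := by
  obtain ⟨h, hh, hh', h_zero, hh_nonneg⟩ := exists_contDiff_hasCompactSupport_fourier_nonneg
  have hderiv₂ : ContDiff ℝ ∞ (deriv (deriv h)) :=
    (contDiff_infty_iff_deriv.mp (contDiff_infty_iff_deriv.mp hh).2).2
  obtain ⟨r, hr : 0 < r, hr_lt⟩ : ∃ r : ℝ, 0 < r ∧
      0 < (2 * Real.pi * r) ^ 2 * (h 0).re + (deriv (deriv h) 0).re := by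
    have htop : Tendsto (fun r : ℝ ↦ (2 * Real.pi * r) ^ 2 * (h 0).re + (deriv (deriv h) 0).re)
        atTop atTop := by
      refine tendsto_atTop_add_const_right _ _ (Tendsto.atTop_mul_const h_zero ?_)
      exact (tendsto_pow_atTop two_ne_zero).comp (tendsto_id.const_mul_atTop (by positivity))
    exact ((eventually_gt_atTop 0).and (htop.eventually_gt_atTop 0)).exists
  refine ⟨r, hr, fun t ↦ ((2 * Real.pi * r) ^ 2 : ℝ) * h t + deriv (deriv h) t,
    (contDiff_const.mul hh).add hderiv₂, hh'.mul_left.add hh'.deriv.deriv, ?_, fun u hu ↦ ?_⟩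
  · simpa only [Complex.add_re, Complex.re_ofReal_mul] using hr_lt
  · have hcoef : (2 * Real.pi) ^ 2 * (r ^ 2 - u ^ 2) ≤ 0 :=
      mul_nonpos_of_nonneg_of_nonpos (by positivity)
        (sub_nonpos.mpr (sq_le_sq.mpr (by rw [abs_of_pos hr]; exact hu.le)))
    rw [fourier_mul_add_deriv_deriv hh hh']
    exact mul_nonpos_of_nonpos_of_nonneg (by exact_mod_cast hcoef) (hh_nonneg u)

theorem exists_fourier_nonpos_of_lt_abs {c : ℝ} (hc : 0 < c) :
    ∃ w : ℝ → ℂ, ContDiff ℝ ∞ w ∧ HasCompactSupport w ∧ 0 < (w 0).re ∧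
      ∀ u, c < |u| → 𝓕 w u ≤ 0 := by
  obtain ⟨r, hr, w, hw, hw', hw_zero, hw_nonpos⟩ := exists_radius_fourier_nonpos_of_lt_abs
  have hκ : 0 < c / r := by positivity
  refine ⟨fun t ↦ w (c / r * t), hw.comp (by fun_prop),
    hw'.comp_homeomorph (Homeomorph.mulLeft₀ (c / r) hκ.ne'), by simpa using hw_zero, fun u hu ↦ ?_⟩
  rw [fourier_comp_mul_left w hκ]
  refine mul_nonpos_of_nonneg_of_nonpos (Complex.zero_le_real.mpr (inv_pos.mpr hκ).le)
    (hw_nonpos _ ?_)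
  rwa [abs_div, abs_of_pos hκ, lt_div_iff₀ hκ, mul_div_cancel₀ _ hr.ne']

theorem exists_fourier_le_indicator {c : ℝ} (hc : 0 < c) :
    ∃ w : ℝ → ℂ, Continuous w ∧ HasCompactSupport w ∧ Integrable (𝓕 w) ∧ 0 < (w 0).re ∧
      ∀ u, (𝓕 w u).re ≤ (Icc (-c) c).indicator 1 u := by
  obtain ⟨w, hw, hw', hw_zero, hw_nonpos⟩ := exists_fourier_nonpos_of_lt_abs hc
  let M := ∫ t, ‖w t‖
  have hM : 0 < M := hw.continuous.norm.integral_pos_of_hasCompactSupport_nonneg_nonzero hw'.norm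
    (fun t ↦ norm_nonneg _) (x := 0) (norm_ne_zero_iff.mpr fun h ↦ by simp [h] at hw_zero)
  have fourier_smul (u : ℝ) : 𝓕 (M⁻¹ • w) u = M⁻¹ • 𝓕 w u := by
    simp only [Real.fourier_real_eq, Pi.smul_apply, smul_comm _ M⁻¹, integral_smul]
  refine ⟨M⁻¹ • w, hw.continuous.const_smul _, hw'.smul_left,
    (integrable_fourier_of_hasCompactSupport hw hw').smul M⁻¹ |>.congr
      (.of_forall fun u ↦ (fourier_smul u).symm), ?_, fun u ↦ ?_⟩
  · simpa using mul_pos (inv_pos.mpr hM) hw_zero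
  · rw [fourier_smul, Complex.smul_re, smul_eq_mul, inv_mul_le_iff₀ hM]
    by_cases hu : u ∈ Icc (-c) c
    · rw [indicator_of_mem hu, Pi.one_apply, mul_one]
      exact (Complex.re_le_norm _).trans (VectorFourier.norm_fourierIntegral_le_integral_norm ..)
    · have : c < |u| := lt_of_not_ge (mt abs_le.mp hu)
      simpa [hu] using (Complex.le_def.mp (hw_nonpos u this)).1

end Minorant

theorem exists_pos_eventually_lt_sum_Icc_div {a : ℕ → ℝ} (ha : ∀ n, 0 ≤ a n)
    (ha_summable : ∀ s : ℂ, 1 < s.re → LSeriesSummable (fun n ↦ (a n : ℂ)) s)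
    {A : ℝ} (hA : 0 < A) {G : ℂ → ℂ} (hG : ContinuousOn G {s | 1 ≤ s.re})
    (hGa : EqOn G (fun s ↦ LSeries (fun n ↦ (a n : ℂ)) s - A / (s - 1)) {s | 1 < s.re})
    {θ : ℝ} (hθ : 0 < θ) (hθ' : θ < 1) :
    ∃ B > 0, ∀ᶠ x in atTop, B < ∑ n ∈ Finset.Icc ⌈θ * x⌉₊ ⌊x⌋₊, a n / n := by
  set c := -Real.log θ / 2 with hc_def
  have hc : 0 < c := by linarith [Real.log_neg hθ hθ']
  obtain ⟨w, hw, hw', hw_fourier, hw_zero, hwc⟩ := exists_fourier_le_indicator hc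
  have hAw : 0 < A * (w 0).re := mul_pos hA hw_zero
  refine ⟨A * (w 0).re / 2, half_pos hAw, ?_⟩
  have h_window := eventually_lt_sum_Icc_div ha ha_summable hG hGa hw hw' hw_fourier hwc
    (half_lt_self hAw)
  have h_log : Tendsto (fun x ↦ Real.log x - c) atTop atTop :=
    tendsto_atTop_add_const_right _ _ Real.tendsto_log_atTop
  filter_upwards [h_log.eventually h_window, eventually_gt_atTop 0] with x hx hx_pos
  have h_left : Real.exp (Real.log x - c - c) = θ * x := by
    rw [show Real.log x - c - c = Real.log θ + Real.log x by rw [hc_def]; ring, Real.exp_add,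
      Real.exp_log hθ, Real.exp_log hx_pos]
  rwa [h_left, sub_add_cancel, Real.exp_log hx_pos] at hx

theorem eventually_sum_Icc_lt_of_summable {f : ℕ → ℝ} (hf : Summable f) {θ B : ℝ} (hθ : 0 < θ)
    (hB : 0 < B) : ∀ᶠ x : ℝ in atTop, ∑ n ∈ Finset.Icc ⌈θ * x⌉₊ ⌊x⌋₊, f n < B := by
  obtain ⟨s, hs⟩ := summable_iff_vanishing_norm.mp hf B hB
  obtain ⟨M, hM⟩ := s.bddAbove
  filter_upwards [(tendsto_id.const_mul_atTop hθ).eventually_gt_atTop (M : ℝ)] with x hx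
  refine (le_abs_self _).trans_lt (hs _ (Finset.disjoint_left.mpr fun n hn hns ↦ ?_))
  exact (Nat.lt_ceil.mpr hx).not_ge ((Finset.mem_Icc.mp hn).1.trans (hM hns))

open ArithmeticFunction.vonMangoldt in
theorem eventually_exists_prime_eq_mem_Icc {q : ℕ} [NeZero q] {a : ZMod q} (ha : IsUnit a) {θ : ℝ}
    (hθ : 0 < θ) (hθ' : θ < 1) :
    ∀ᶠ x : ℝ in atTop, ∃ p : ℕ, p.Prime ∧ (p : ZMod q) = a ∧ (p : ℝ) ∈ Icc (θ * x) x := by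
  obtain ⟨B, hB, h_window⟩ := exists_pos_eventually_lt_sum_Icc_div (residueClass_nonneg a)
    (fun s hs ↦ LSeriesSummable_of_abscissaOfAbsConv_lt_re
      ((abscissaOfAbsConv_residueClass_le_one a).trans_lt (by exact_mod_cast hs)))
    (A := (q.totient : ℝ)⁻¹) (by have := q.totient_pos.mpr (NeZero.pos q); positivity)
    (continuousOn_LFunctionResidueClassAux a)
    (by simpa using eqOn_LFunctionResidueClassAux ha) hθ hθ'
  filter_upwards [h_window, eventually_sum_Icc_lt_of_summable
    (summable_residueClass_non_primes_div a) hθ hB, eventually_ge_atTop 0] with x hx hx' hx_nonneg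
  by_contra! h_no_prime
  refine (hx.trans_eq (Finset.sum_congr rfl fun n hn ↦ ?_)).not_gt hx'
  split_ifs with hn_prime
  · have hn_ne : (n : ZMod q) ≠ a := fun hna ↦ h_no_prime n hn_prime hna
      ⟨Nat.ceil_le.mp (Finset.mem_Icc.mp hn).1,
        (Nat.le_floor_iff hx_nonneg).mp (Finset.mem_Icc.mp hn).2⟩
    simp [residueClass, hn_ne]
  · rfl

/-! ### Choice of parameters -/

theorem exists_le_ncard_edgeSet_of_card_field {F : Type*} [Field F] [Fintype F] {s n : ℕ} {β : ℝ}
    (hβ : β ∈ Icc 0 1) (hn : (s + β) * Fintype.card F ^ 2 ≤ n) :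
    ∃ G : SimpleGraph (Fin n), ¬ ContainsCopy (Bgraph (2 * s)) G ∧
      s * (s + 2 * β - β ^ 2) / 2 * (Fintype.card F : ℝ) ^ 3 -
        s * (s + 2) / 2 * (Fintype.card F : ℝ) ^ 2 ≤ G.edgeSet.ncard := by
  classical
  set q := Fintype.card F with hq_def
  have hq : 1 ≤ q := Fintype.card_pos
  have hβq : 0 ≤ β * q := mul_nonneg hβ.1 q.cast_nonneg
  have hm_le : (⌊β * q⌋₊ : ℝ) ≤ β * q := Nat.floor_le hβq
  have hm_gt : β * q - 1 < ⌊β * q⌋₊ := Nat.sub_one_lt_floor _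
  have hβq_le : β * q ≤ q := mul_le_of_le_one_left q.cast_nonneg hβ.2
  have hmq : ⌊β * q⌋₊ ≤ q := by exact_mod_cast hm_le.trans hβq_le
  obtain ⟨S, -, hS⟩ := Finset.exists_subset_card_eq (s := (Finset.univ : Finset F)) hmq
  have hcard : Fintype.card (LabelledPoint S (Fin s)) = q * (q * s + ⌊β * q⌋₊) := by
    rw [LabelledPoint.card_eq, Fintype.card_fin, hS]
  obtain ⟨G, hG_free, hG_card⟩ := exists_fin_not_containsCopy (n := n) Bgraph_exists_adj
    (blowUpGraph.not_containsCopy_Bgraph (S := S) (ι := Fin s)) (by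
      rify [hcard]
      have := mul_le_mul_of_nonneg_left hm_le q.cast_nonneg
      linarith)
  rw [Fintype.card_fin] at hG_free
  refine ⟨G, hG_free, ?_⟩
  have hedges := blowUpGraph.two_mul_ncard_edgeSet (S := S) (ι := Fin s)
  rw [← hG_card, hcard, Fintype.card_fin, hS, ← hq_def] at hedges
  rify [hq, hmq] at hedges
  generalize (⌊β * q⌋₊ : ℝ) = m at *
  have key : (s + 2 * β - β ^ 2) * (q : ℝ) ^ 2 - (s + 2) * q ≤
      (q * s + m) * (q - 1) + (q - m) * m := by
    have hd : 0 ≤ β * q - m := sub_nonneg.mpr hm_le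
    have hd' : 0 ≤ 1 - (β * q - m) := by linarith
    have h₁ := mul_nonneg (mul_nonneg (sub_nonneg.mpr hβ.2) q.cast_nonneg) hd'
    have h₂ := mul_nonneg hd hd'
    linarith
  have := mul_le_mul_of_nonneg_left key (by positivity : 0 ≤ (s * q / 2 : ℝ))
  linarith

theorem exists_mem_Ioo_lt_mul_pow (c : ℝ) {ε : ℝ} (hε : 0 < ε) (k : ℕ) :
    ∃ θ ∈ Ioo (0 : ℝ) 1, c - ε < c * θ ^ k := by
  have hcont : Tendsto (fun θ : ℝ ↦ c * θ ^ k) (𝓝[<] 1) (𝓝 c) := by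
    have : Continuous fun θ : ℝ ↦ c * θ ^ k := by fun_prop
    simpa using (this.tendsto 1).mono_left nhdsWithin_le_nhds
  have hmem : ∀ᶠ θ in 𝓝[<] (1 : ℝ), θ ∈ Ioo (0 : ℝ) 1 := Ioo_mem_nhdsLT zero_lt_one
  exact (hmem.and (hcont.eventually_const_lt (sub_lt_self c hε))).exists

theorem eventually_exists_prime_le_cubic {c C ε : ℝ} (hc : 0 ≤ c) (hC : 0 ≤ C) (hε : 0 < ε) :
    ∀ᶠ x : ℝ in atTop, ∃ p : ℕ, p.Prime ∧ p ≤ x ∧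
      (c - ε) * x ^ 3 ≤ c * (p : ℝ) ^ 3 - C * (p : ℝ) ^ 2 := by
  obtain ⟨θ, ⟨hθ, hθ'⟩, hcθ⟩ := exists_mem_Ioo_lt_mul_pow c (half_pos hε) 3
  filter_upwards [eventually_exists_prime_eq_mem_Icc (q := 1) isUnit_one hθ hθ',
    eventually_ge_atTop (2 * C / ε), eventually_ge_atTop 0] with x hx_prime hx hx_nonneg
  obtain ⟨p, hp, -, hθp, hpx⟩ := hx_prime
  refine ⟨p, hp, hpx, ?_⟩
  have hCx : C ≤ ε / 2 * x := by
    rw [div_le_iff₀ hε] at hx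
    linarith
  calc (c - ε) * x ^ 3 = (c - ε / 2) * x ^ 3 - ε / 2 * x * x ^ 2 := by ring
    _ ≤ c * θ ^ 3 * x ^ 3 - C * x ^ 2 := by gcongr
    _ = c * (θ * x) ^ 3 - C * x ^ 2 := by ring
    _ ≤ c * (p : ℝ) ^ 3 - C * (p : ℝ) ^ 2 := by gcongr

theorem eventually_exists_le_ncard_edgeSet {s : ℕ} {β ε : ℝ} (hβ : β ∈ Icc 0 1)
    (hK : 0 < s + β) (hε : 0 < ε) :
    ∀ᶠ n : ℕ in atTop, ∃ G : SimpleGraph (Fin n), ¬ ContainsCopy (Bgraph (2 * s)) G ∧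
      (s * (s + 2 * β - β ^ 2) / 2 / (s + β) ^ (3 / 2 : ℝ) - ε) * (n : ℝ) ^ (3 / 2 : ℝ) ≤
        G.edgeSet.ncard := by
  have hκ : 0 < (s + β) ^ (3 / 2 : ℝ) := by positivity
  have hc : 0 ≤ s * (s + 2 * β - β ^ 2) / 2 := by
    have : β ^ 2 ≤ β := pow_le_of_le_one hβ.1 hβ.2 two_ne_zero
    have : 0 ≤ s + 2 * β - β ^ 2 := by linarith [hβ.1]
    positivity
  have h_sqrt : Tendsto (fun n : ℕ ↦ √(n / (s + β))) atTop atTop :=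
    Real.tendsto_sqrt_atTop.comp (tendsto_natCast_atTop_atTop.atTop_div_const hK)
  filter_upwards [h_sqrt.eventually (eventually_exists_prime_le_cubic hc
    (by positivity : (0 : ℝ) ≤ s * (s + 2) / 2) (mul_pos hε hκ))] with n ⟨p, hp, hpx, hp_edges⟩
  have : Fact p.Prime := ⟨hp⟩
  have hpn : (s + β) * (p : ℝ) ^ 2 ≤ n := by
    rw [Real.le_sqrt (by positivity) (by positivity), le_div_iff₀ hK] at hpx
    linarith
  have sqrt_cube : √(n / (s + β)) ^ 3 = (n : ℝ) ^ (3 / 2 : ℝ) / (s + β) ^ (3 / 2 : ℝ) := by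
    rw [Real.sqrt_eq_rpow, ← Real.rpow_mul_natCast (by positivity),
      ← Real.div_rpow (by positivity) hK.le]
    norm_num
  obtain ⟨G, hG, hG_edges⟩ := exists_le_ncard_edgeSet_of_card_field (F := ZMod p) hβ
    (by rwa [ZMod.card])
  rw [ZMod.card] at hG_edges
  refine ⟨G, hG, le_trans (le_of_eq ?_) (hp_edges.trans hG_edges)⟩
  rw [sqrt_cube]
  field_simp

theorem ex_B2s_lower (s : ℕ) (hs : 1 ≤ s) (ε : ℝ) (hε : 0 < ε) :
    ∃ N : ℕ, ∀ n : ℕ, N ≤ n → ∃ G : SimpleGraph (Fin n),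
      ¬ ContainsCopy (Bgraph (2 * s)) G ∧
      (2 * (s : ℝ) * ((s : ℝ) + 1) * (Real.sqrt (4 * (s : ℝ) ^ 2 + 5 * s + 1) - 2 * s - 1)
          / (Real.sqrt (4 * (s : ℝ) ^ 2 + 5 * s + 1) - s - 1) ^ (3/2 : ℝ) - ε)
          * (n : ℝ) ^ (3/2 : ℝ)
        ≤ (G.edgeSet.ncard : ℝ) := by
  set r := √(4 * (s : ℝ) ^ 2 + 5 * s + 1)
  set β := r - 2 * s - 1
  have r_sq : r ^ 2 = 4 * (s : ℝ) ^ 2 + 5 * s + 1 := Real.sq_sqrt (by positivity)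
  have hβ : β ∈ Icc 0 1 := by
    have h_lower : 2 * (s : ℝ) + 1 ≤ r := Real.le_sqrt_of_sq_le (by nlinarith)
    have h_upper : r ≤ 2 * s + 2 := Real.sqrt_le_iff.mpr ⟨by positivity, by nlinarith⟩
    constructor <;> linarith
  have coeff_eq : s * (s + 2 * β - β ^ 2) / 2 = 2 * (s : ℝ) * (s + 1) * β := by
    linear_combination (-(s : ℝ) / 2) * r_sq
  have base_eq : r - s - 1 = s + β := by ring
  rw [base_eq, ← coeff_eq]
  have hK : 0 < s + β := add_pos_of_pos_of_nonneg (mod_cast hs) hβ.1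
  exact eventually_atTop.mp (eventually_exists_le_ncard_edgeSet hβ hK hε)
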